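/- arXiv:1104.5000 — 2 statements merged into one kernel-verified Lean document; each statement's English description precedes it below -/
import Mathlib

section
/- Let E be a finite-dimensional complex inner product space, T : E → E a self-adjoint linear map, and δ > 0. Suppose ψ_1, …, ψ_L is an orthonormal family in E and μ_1, …, μ_L are real numbers such that: (i) ‖Tψ_l − μ_l ψ_l‖² ≤ δ for every l; (ii) ⟨Tψ_l, ψ_{l'}⟩ = 0 for all l ≠ l'; (iii) Σ_{l ≠ l'} |⟨Tψ_l, Tψ_{l'}⟩| ≤ δ. Then for every real number ν and all complex numbers c_1, …, c_L with Σ_l |c_l|² = 1, one has ‖(T − ν)(Σ_l c_l ψ_l)‖ ≤ √(2δ) + max_l |ν − μ_l|. -/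
open scoped InnerProductSpace

/-!
Write `φ l = T (ψ l) - μ l • ψ l` for the residuals and `x = ∑ l, c l • ψ l`. Then
`T x - ν • x = ∑ l, c l • φ l - ∑ l, ((ν - μ l) * c l) • ψ l`. Distinct residuals have the same
inner products as the images `T (ψ l)`, since every other term in the expansion vanishes. Hence the
first sum is small by expanding its square: the diagonal is controlled by the residual norms and
the rest by the off-diagonal inner products of the images. The second sum is estimated by the
Pythagorean theorem.
-/

theorem mul_le_sum_sq {ι R : Type*} [CommRing R] [LinearOrder R] [IsStrictOrderedRing R]
    {f : ι → R} {s : Finset ι} {i j : ι} (hi : i ∈ s) (hj : j ∈ s) :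
    f i * f j ≤ ∑ k ∈ s, f k ^ 2 := by
  have sq_le {k : ι} (hk : k ∈ s) : f k ^ 2 ≤ ∑ k ∈ s, f k ^ 2 :=
    Finset.single_le_sum (f := fun k ↦ f k ^ 2) (fun k _ ↦ sq_nonneg (f k)) hk
  linarith [two_mul_le_add_sq (f i) (f j), sq_le hi, sq_le hj]

section InnerProductSpace

variable {𝕜 E ι : Type*} [RCLike 𝕜] [SeminormedAddCommGroup E] [InnerProductSpace 𝕜 E]

variable (𝕜) in
theorem norm_sum_sq_le_sum_norm_sq_add_sum_offDiag (s : Finset ι) (x : ι → E) :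
    ‖∑ i ∈ s, x i‖ ^ 2 ≤
      ∑ i ∈ s, ‖x i‖ ^ 2 + ∑ p ∈ s.offDiag, ‖⟪x p.1, x p.2⟫_𝕜‖ := by
  classical
  calc ‖∑ i ∈ s, x i‖ ^ 2
      = ‖∑ i ∈ s, ∑ j ∈ s, ⟪x i, x j⟫_𝕜‖ := by
        simp_rw [← inner_sum, ← sum_inner, inner_self_eq_norm_sq_to_K, norm_pow,
          RCLike.norm_ofReal, abs_norm]
    _ ≤ ∑ p ∈ s ×ˢ s, ‖⟪x p.1, x p.2⟫_𝕜‖ := by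
        rw [← Finset.sum_product']
        exact norm_sum_le _ _
    _ = ∑ i ∈ s, ‖x i‖ ^ 2 + ∑ p ∈ s.offDiag, ‖⟪x p.1, x p.2⟫_𝕜‖ := by
        rw [← Finset.diag_union_offDiag, Finset.sum_union s.disjoint_diag_offDiag,
          Finset.sum_diag]
        simp_rw [inner_self_eq_norm_sq_to_K, norm_pow, RCLike.norm_ofReal, abs_norm]

theorem norm_sum_smul_le_sqrt_mul_sqrt {s : Finset ι} {φ : ι → E} {δ ε : ℝ}
    (hnorm : ∀ i ∈ s, ‖φ i‖ ^ 2 ≤ δ)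
    (hinner : ∑ p ∈ s.offDiag, ‖⟪φ p.1, φ p.2⟫_𝕜‖ ≤ ε) (c : ι → 𝕜) :
    ‖∑ i ∈ s, c i • φ i‖ ≤ √(δ + ε) * √(∑ i ∈ s, ‖c i‖ ^ 2) := by
  set S := ∑ i ∈ s, ‖c i‖ ^ 2 with hS
  have hS₀ : 0 ≤ S := by positivity
  have diagonal : ∑ i ∈ s, ‖c i • φ i‖ ^ 2 ≤ δ * S := by
    rw [hS, Finset.mul_sum]
    refine Finset.sum_le_sum fun i hi ↦ ?_
    rw [norm_smul, mul_pow, mul_comm]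
    gcongr
    exact hnorm i hi
  have off_diagonal : ∑ p ∈ s.offDiag, ‖⟪c p.1 • φ p.1, c p.2 • φ p.2⟫_𝕜‖ ≤ ε * S := by
    refine le_trans ?_ (mul_le_mul_of_nonneg_right hinner hS₀)
    rw [Finset.sum_mul]
    refine Finset.sum_le_sum fun p hp ↦ ?_
    obtain ⟨hp₁, hp₂, -⟩ := Finset.mem_offDiag.1 hp
    calc ‖⟪c p.1 • φ p.1, c p.2 • φ p.2⟫_𝕜‖
        = ‖⟪φ p.1, φ p.2⟫_𝕜‖ * (‖c p.1‖ * ‖c p.2‖) := by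
          rw [inner_smul_left, inner_smul_right, norm_mul, norm_mul, RCLike.norm_conj]
          ring
      _ ≤ ‖⟪φ p.1, φ p.2⟫_𝕜‖ * S := by
          gcongr
          exact mul_le_sum_sq (f := fun i ↦ ‖c i‖) hp₁ hp₂
  rw [← Real.sqrt_mul' _ hS₀]
  refine Real.le_sqrt_of_sq_le ?_
  linarith [norm_sum_sq_le_sum_norm_sq_add_sum_offDiag 𝕜 s fun i ↦ c i • φ i]

theorem inner_sub_smul_sub_smul_of_inner_eq_zero {x y u v : E} (hxy : ⟪x, y⟫_𝕜 = 0)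
    (huy : ⟪u, y⟫_𝕜 = 0) (hxv : ⟪x, v⟫_𝕜 = 0) (a b : 𝕜) :
    ⟪u - a • x, v - b • y⟫_𝕜 = ⟪u, v⟫_𝕜 := by
  simp [inner_sub_left, inner_sub_right, inner_smul_left, inner_smul_right, hxy, huy, hxv]

theorem norm_sum_mul_smul_le_of_orthonormal {ψ : ι → E} (hψ : Orthonormal 𝕜 ψ)
    {s : Finset ι} {d : ι → 𝕜} {M : ℝ} (hM : 0 ≤ M) (hd : ∀ i ∈ s, ‖d i‖ ≤ M) (c : ι → 𝕜) :
    ‖∑ i ∈ s, (d i * c i) • ψ i‖ ≤ M * √(∑ i ∈ s, ‖c i‖ ^ 2) := by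
  have pythagoras : ‖∑ i ∈ s, (d i * c i) • ψ i‖ ^ 2 = ∑ i ∈ s, ‖d i * c i‖ ^ 2 :=
    hψ.orthogonalFamily.norm_sum (fun i ↦ d i * c i) s
  rw [← Real.sqrt_sq hM, ← Real.sqrt_mul (sq_nonneg M)]
  refine Real.le_sqrt_of_sq_le ?_
  rw [pythagoras, Finset.mul_sum]
  refine Finset.sum_le_sum fun i hi ↦ ?_
  rw [norm_mul, mul_pow]
  gcongr
  exact hd i hi

theorem operator_minus_nu_on_combination_of_almost_eigensections_general [Fintype ι]
    (T : E →ₗ[𝕜] E) {δ ε : ℝ} {ψ : ι → E} (hψ : Orthonormal 𝕜 ψ) {μ : ι → 𝕜}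
    (hres : ∀ l, ‖T (ψ l) - μ l • ψ l‖ ^ 2 ≤ δ)
    (horth : ∀ l l', l ≠ l' → ⟪T (ψ l), ψ l'⟫_𝕜 = 0)
    (himage : ∑ p ∈ Finset.univ.offDiag, ‖⟪T (ψ p.1), T (ψ p.2)⟫_𝕜‖ ≤ ε) (ν : 𝕜) (c : ι → 𝕜) :
    ‖T (∑ l, c l • ψ l) - ν • ∑ l, c l • ψ l‖ ≤
      (√(δ + ε) + ⨆ l, ‖ν - μ l‖) * √(∑ l, ‖c l‖ ^ 2) := by
  set φ : ι → E := fun l ↦ T (ψ l) - μ l • ψ l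
  have decomposition : T (∑ l, c l • ψ l) - ν • ∑ l, c l • ψ l =
      ∑ l, c l • φ l - ∑ l, ((ν - μ l) * c l) • ψ l := by
    simp_rw [map_sum, map_smul, Finset.smul_sum, ← Finset.sum_sub_distrib]
    refine Finset.sum_congr rfl fun l _ ↦ ?_
    module
  have inner_residuals {i j : ι} (hij : i ≠ j) : ⟪φ i, φ j⟫_𝕜 = ⟪T (ψ i), T (ψ j)⟫_𝕜 :=
    inner_sub_smul_sub_smul_of_inner_eq_zero (hψ.inner_eq_zero hij) (horth i j hij)
      (inner_eq_zero_symm.1 (horth j i hij.symm)) (μ i) (μ j)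
  have sum_inner_residuals : ∑ p ∈ Finset.univ.offDiag, ‖⟪φ p.1, φ p.2⟫_𝕜‖ ≤ ε := by
    refine le_of_eq_of_le (Finset.sum_congr rfl fun p hp ↦ ?_) himage
    rw [inner_residuals (Finset.mem_offDiag.1 hp).2.2]
  have dist_le_iSup (l : ι) : ‖ν - μ l‖ ≤ ⨆ l, ‖ν - μ l‖ :=
    le_ciSup (f := fun l ↦ ‖ν - μ l‖) (Set.finite_range _).bddAbove l
  rw [decomposition, add_mul]
  exact norm_sub_le_of_le
    (norm_sum_smul_le_sqrt_mul_sqrt (fun l _ ↦ hres l) sum_inner_residuals c)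
    (norm_sum_mul_smul_le_of_orthonormal hψ (Real.iSup_nonneg fun _ ↦ norm_nonneg _)
      (fun l _ ↦ dist_le_iSup l) c)

end InnerProductSpace

/-- The key estimate in the proof of Lemma 5.4: the operator `T - ν` applied to a unit
combination of the almost eigensections is controlled by `√(2δ) + max_l |ν - μ_l|`. -/
theorem operator_minus_nu_on_combination_of_almost_eigensections
    {E : Type*} [NormedAddCommGroup E] [InnerProductSpace ℂ E] [FiniteDimensional ℂ E]
    (T : E →ₗ[ℂ] E) (hT : T.IsSymmetric)
    (δ : ℝ) (hδ : 0 < δ) (L : ℕ) (ψ : Fin L → E) (hψ : Orthonormal ℂ ψ)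
    (μ : Fin L → ℝ)
    (h1 : ∀ l, ‖T (ψ l) - (μ l : ℂ) • ψ l‖ ^ 2 ≤ δ)
    (h2 : ∀ l l', l ≠ l' → ⟪T (ψ l), ψ l'⟫_ℂ = 0)
    (h3 : ∑ p ∈ Finset.univ.offDiag, ‖⟪T (ψ p.1), T (ψ p.2)⟫_ℂ‖ ≤ δ) :
    ∀ (ν : ℝ) (c : Fin L → ℂ), (∑ l, ‖c l‖ ^ 2) = 1 →
      ‖T (∑ l, c l • ψ l) - (ν : ℂ) • ∑ l, c l • ψ l‖
        ≤ Real.sqrt (2 * δ) + ⨆ l, |ν - μ l| := by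
  intro ν c hc
  simpa only [← two_mul, ← Complex.ofReal_sub, Complex.norm_real, Real.norm_eq_abs, hc,
    Real.sqrt_one, mul_one] using
    operator_minus_nu_on_combination_of_almost_eigensections_general T hψ h1 h2 h3 ν c
end

section
/- Let E be a complex inner product space of finite dimension L₀, and let u_1, …, u_L be unit vectors in E. Then L² ≤ L₀ · (L + Σ_{l ≠ l'} |⟨u_l, u_{l'}⟩|²), where the sum runs over all ordered pairs (l, l') with 1 ≤ l, l' ≤ L and l ≠ l'. -/
open scoped InnerProductSpace

/-!
The Gram matrix `G` of the vectors is Hermitian with trace `∑ i, ‖u i‖ ^ 2`, its squared Frobenius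
norm is the sum of all `‖⟪u i, u j⟫‖ ^ 2`, and its rank is at most the dimension of their span.
Only `rank G` eigenvalues of `G` are nonzero, so Cauchy–Schwarz applied to these gives
`(tr G) ^ 2 ≤ rank G * ‖G‖_F ^ 2`.
-/

open Matrix Module Submodule

theorem sq_sum_le_card_ne_zero_mul_sum_sq {ι R : Type*} [Fintype ι] [CommRing R] [LinearOrder R]
    [IsStrictOrderedRing R] (f : ι → R) :
    (∑ i, f i) ^ 2 ≤ Fintype.card {i // f i ≠ 0} * ∑ i, f i ^ 2 := by
  calc (∑ i, f i) ^ 2 = (∑ i with f i ≠ 0, f i) ^ 2 := by rw [Finset.sum_filter_ne_zero]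
    _ ≤ (Finset.univ.filter (f · ≠ 0)).card * ∑ i with f i ≠ 0, f i ^ 2 :=
      sq_sum_le_card_mul_sum_sq
    _ ≤ Fintype.card {i // f i ≠ 0} * ∑ i, f i ^ 2 := by
      rw [Fintype.card_subtype]
      gcongr
      exact Finset.filter_subset _ _

section HermitianMatrix

variable {n 𝕜 : Type*} [Fintype n] [RCLike 𝕜]

theorem trace_conjTranspose_mul_self_eq_sum_norm_sq {m : Type*} [Fintype m] (A : Matrix m n 𝕜) :
    (Aᴴ * A).trace = ((∑ i, ∑ j, ‖A i j‖ ^ 2 : ℝ) : 𝕜) := by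
  rw [Finset.sum_comm]
  simp [trace, mul_apply, RCLike.conj_mul]

theorem trace_sq_eq_sum_eigenvalues_sq [DecidableEq n] {A : Matrix n n 𝕜} (hA : A.IsHermitian) :
    (A ^ 2).trace = ((∑ i, hA.eigenvalues i ^ 2 : ℝ) : 𝕜) := by
  conv_lhs => rw [hA.spectral_theorem, ← map_pow, Unitary.conjStarAlgAut_apply, trace_mul_cycle]
  simp [diagonal_pow, trace_diagonal]

theorem sum_norm_sq_eq_sum_eigenvalues_sq [DecidableEq n] {A : Matrix n n 𝕜}
    (hA : A.IsHermitian) : ∑ i, ∑ j, ‖A i j‖ ^ 2 = ∑ i, hA.eigenvalues i ^ 2 := by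
  apply RCLike.ofReal_injective (K := 𝕜)
  rw [← trace_conjTranspose_mul_self_eq_sum_norm_sq, hA.eq, ← sq, trace_sq_eq_sum_eigenvalues_sq hA]

theorem norm_trace_sq_le_rank_mul_sum_norm_sq {A : Matrix n n 𝕜} (hA : A.IsHermitian) :
    ‖A.trace‖ ^ 2 ≤ A.rank * ∑ i, ∑ j, ‖A i j‖ ^ 2 := by
  classical
  have norm_trace : ‖A.trace‖ = |∑ i, hA.eigenvalues i| := by
    rw [hA.trace_eq_sum_eigenvalues, ← RCLike.ofReal_sum, RCLike.norm_ofReal]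
  rw [norm_trace, sq_abs, hA.rank_eq_card_non_zero_eigs, sum_norm_sq_eq_sum_eigenvalues_sq hA]
  exact sq_sum_le_card_ne_zero_mul_sum_sq hA.eigenvalues

end HermitianMatrix

section Gram

variable {ι 𝕜 E : Type*} [Fintype ι] [RCLike 𝕜] [NormedAddCommGroup E] [InnerProductSpace 𝕜 E]

theorem trace_gram (u : ι → E) : (gram 𝕜 u).trace = ((∑ i, ‖u i‖ ^ 2 : ℝ) : 𝕜) := by
  simp [trace, inner_self_eq_norm_sq_to_K]

theorem rank_gram_le_finrank [FiniteDimensional 𝕜 E] (u : ι → E) :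
    (gram 𝕜 u).rank ≤ finrank 𝕜 E := by
  rw [gram_eq_conjTranspose_mul (stdOrthonormalBasis 𝕜 E)]
  exact (rank_mul_le_right _ _).trans ((rank_le_card_height _).trans_eq (Fintype.card_fin _))

theorem rank_gram_le_finrank_span (u : ι → E) :
    (gram 𝕜 u).rank ≤ finrank 𝕜 (span 𝕜 (Set.range u)) :=
  have := FiniteDimensional.span_of_finite 𝕜 (Set.finite_range u)
  rank_gram_le_finrank fun i ↦ (⟨u i, subset_span ⟨i, rfl⟩⟩ : span 𝕜 (Set.range u))

theorem sum_norm_inner_sq_eq_sum_norm_pow_four_add_sum_offDiag (u : ι → E) :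
    ∑ i, ∑ j, ‖⟪u i, u j⟫_𝕜‖ ^ 2 =
      ∑ i, ‖u i‖ ^ 4 + ∑ p ∈ Finset.univ.offDiag, ‖⟪u p.1, u p.2⟫_𝕜‖ ^ 2 := by
  classical
  rw [← Fintype.sum_prod_type', ← Finset.univ_product_univ, ← Finset.diag_union_offDiag,
    Finset.sum_union (Finset.disjoint_diag_offDiag _), Finset.sum_diag]
  simp [inner_self_eq_norm_sq_to_K, ← pow_mul]

theorem welch_bound_general (u : ι → E) :
    (∑ i, ‖u i‖ ^ 2) ^ 2 ≤ finrank 𝕜 (span 𝕜 (Set.range u)) *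
      (∑ i, ‖u i‖ ^ 4 + ∑ p ∈ Finset.univ.offDiag, ‖⟪u p.1, u p.2⟫_𝕜‖ ^ 2) := by
  rw [← sum_norm_inner_sq_eq_sum_norm_pow_four_add_sum_offDiag]
  calc (∑ i, ‖u i‖ ^ 2) ^ 2 = ‖(gram 𝕜 u).trace‖ ^ 2 := by
        rw [trace_gram, RCLike.norm_ofReal, sq_abs]
    _ ≤ (gram 𝕜 u).rank * ∑ i, ∑ j, ‖⟪u i, u j⟫_𝕜‖ ^ 2 :=
      norm_trace_sq_le_rank_mul_sum_norm_sq (isHermitian_gram 𝕜 u)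
    _ ≤ finrank 𝕜 (span 𝕜 (Set.range u)) * ∑ i, ∑ j, ‖⟪u i, u j⟫_𝕜‖ ^ 2 := by
      gcongr
      exact rank_gram_le_finrank_span u

end Gram

/-- The Welch bound computation in Lemma 7.2: for unit vectors `u₁, …, u_L` in an
`L₀`-dimensional complex inner product space,
`L² ≤ L₀ (L + Σ_{l ≠ l'} |⟨u_l, u_{l'}⟩|²)`. -/
theorem welch_bound
    {E : Type*} [NormedAddCommGroup E] [InnerProductSpace ℂ E] [FiniteDimensional ℂ E]
    (L₀ L : ℕ) (hdim : Module.finrank ℂ E = L₀)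
    (u : Fin L → E) (hu : ∀ l, ‖u l‖ = 1) :
    (L : ℝ) ^ 2 ≤ (L₀ : ℝ) *
      ((L : ℝ) + ∑ p ∈ Finset.univ.offDiag, ‖⟪u p.1, u p.2⟫_ℂ‖ ^ 2) := by
  grw [← hdim, ← (span ℂ (Set.range u)).finrank_le]
  simpa [hu] using welch_bound_general (𝕜 := ℂ) u
end
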